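/- arXiv:0805.4482 — 2 statements merged into one kernel-verified Lean document; each statement's English description precedes it below -/
import Mathlib

section
/- Let n ≥ 1, let ν be the Haar probability measure on the orthogonal group O(n) of n×n real orthogonal matrices, let x = (x₁,…,x_n) ∈ ℝⁿ, and let y = (y₁,…,y_n) ∈ ℝⁿ have pairwise distinct entries. For 1 ≤ i, j ≤ n define M_{i,j}(x, y) = ∫_{O(n)} (O_{ij})² · exp(tr(X O Y Oᵀ)) dν(O), where X = diag(x₁,…,x_n) and Y = diag(y₁,…,y_n). Then for each i, j, the function y_j ↦ M_{i,j}(x,y) is differentiable and ∂M_{i,j}/∂y_j + (1/2) Σ_{l≠j} (M_{i,l} − M_{i,j})/(y_l − y_j) = x_i · M_{i,j}. -/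
open MeasureTheory Matrix Finset Function

noncomputable instance {n : ℕ} : MeasurableSpace (Matrix (Fin n) (Fin n) ℝ) :=
  inferInstanceAs (MeasurableSpace (Fin n → Fin n → ℝ))

/-- The quadratic moment `M_{i,j}(x,y) = ∫_{O(n)} (O_{ij})² e^{tr(X O Y Oᵀ)} dν(O)`
where `X = diag x` and `Y = diag y`. -/
noncomputable def Mmom (n : ℕ) (ν : Measure (Matrix.orthogonalGroup (Fin n) ℝ))
    (x y : Fin n → ℝ) (i j : Fin n) : ℝ :=
  ∫ O : Matrix.orthogonalGroup (Fin n) ℝ,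
    ((O : Matrix (Fin n) (Fin n) ℝ) i j) ^ 2 *
      Real.exp (Matrix.trace (Matrix.diagonal x * (O : Matrix (Fin n) (Fin n) ℝ) *
        Matrix.diagonal y * (O : Matrix (Fin n) (Fin n) ℝ)ᵀ)) ∂ν

/-!
Write `W = exp (tr (X O Y Oᵀ))` and `B = Oᵀ X O`. Invariance of `ν` under `O ↦ O exp(tA)` with `A`
the generator of the rotations in the `(j, l)` plane, applied to `O_{ij} O_{il} W`, gives the
Schwinger–Dyson identity `M_{il} - M_{ij} = 2 (y_l - y_j) C_l`, `C_l = ∫ O_{ij} O_{il} B_{jl} W dν`.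
Differentiating in `y_j` brings down `B_{jj}`, so `∂M_{ij}/∂y_j = C_j`. Hence the left-hand side of
the equation is `∑ l, C_l`, and since `O B = X O` this sum is `x_i M_{ij}`.
-/

section CompactSpace

variable {α E : Type*} [TopologicalSpace α] [CompactSpace α] [MeasurableSpace α] [BorelSpace α]
  [NormedAddCommGroup E] {μ : Measure α} [IsFiniteMeasure μ]

theorem integrable_of_continuous_of_compactSpace {f : α → E} (hf : Continuous f) :
    Integrable f μ :=
  hf.integrable_of_hasCompactSupport (.of_compactSpace f)

variable [NormedSpace ℝ E]

theorem hasDerivAt_integral_of_continuous {F F' : ℝ → α → E} (hF : ∀ t, Continuous (F t))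
    (hF' : Continuous (uncurry F')) (hFF' : ∀ t a, HasDerivAt (F · a) (F' t a) t) (t₀ : ℝ) :
    HasDerivAt (fun t ↦ ∫ a, F t a ∂μ) (∫ a, F' t₀ a ∂μ) t₀ := by
  obtain ⟨C, hC⟩ := ((isCompact_closedBall t₀ 1).prod isCompact_univ).exists_bound_of_continuousOn
    hF'.continuousOn
  have hF'_int : Integrable (F' t₀) μ :=
    integrable_of_continuous_of_compactSpace (hF'.comp (Continuous.prodMk_right t₀))
  exact (hasDerivAt_integral_of_dominated_loc_of_deriv_le (bound := fun _ ↦ C)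
    (Metric.closedBall_mem_nhds t₀ one_pos)
    (.of_forall fun t ↦ (integrable_of_continuous_of_compactSpace (hF t)).aestronglyMeasurable)
    (integrable_of_continuous_of_compactSpace (hF t₀)) hF'_int.aestronglyMeasurable
    (.of_forall fun a t ht ↦ hC (t, a) ⟨ht, trivial⟩) (integrable_const C)
    (.of_forall fun a t _ ↦ hFF' t a)).2

theorem integral_eq_zero_of_hasDerivAt_flow (φ : Flow ℝ α)
    (hφ : ∀ t, MeasurePreserving (φ t) μ μ) {f g : α → E} (hf : Continuous f) (hg : Continuous g)
    (hfg : ∀ a, HasDerivAt (fun t ↦ f (φ t a)) (g a) 0) :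
    ∫ a, g a ∂μ = 0 := by
  have hderiv (t : ℝ) (a : α) : HasDerivAt (fun s ↦ f (φ s a)) (g (φ t a)) t := by
    have h := HasDerivAt.comp_sub_const t t ((sub_self t).symm ▸ hfg (φ t a))
    simpa only [← φ.map_add, sub_add_cancel] using h
  have hconst (t : ℝ) : ∫ a, f (φ t a) ∂μ = ∫ a, f a ∂μ := by
    rw [← integral_map (hφ t).aemeasurable, (hφ t).map_eq]
    exact (integrable_of_continuous_of_compactSpace hf).aestronglyMeasurable
  have h := hasDerivAt_integral_of_continuous (μ := μ) (F' := fun t a ↦ g (φ t a))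
    (fun t ↦ by fun_prop) (hg.comp φ.cont') hderiv 0
  simp only [hconst, φ.map_zero_apply] at h
  exact h.unique (hasDerivAt_const 0 _)

end CompactSpace

theorem isMulRightInvariant_of_isProbabilityMeasure {G : Type*} [TopologicalSpace G] [Group G]
    [IsTopologicalGroup G] [LocallyCompactSpace G] [MeasurableSpace G] [BorelSpace G]
    (μ : Measure G) [μ.IsHaarMeasure] [IsProbabilityMeasure μ] : μ.IsMulRightInvariant where
  map_mul_right_eq_self g :=
    have := Measure.isProbabilityMeasure_map (μ := μ)
      (continuous_mul_const g).measurable.aemeasurable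
    Measure.isHaarMeasure_eq_of_isProbabilityMeasure _ _

section Orthogonal

variable {ι : Type*} [Fintype ι] [DecidableEq ι]

instance : CompactSpace (orthogonalGroup ι ℝ) := by
  have hcube : IsCompact (Set.univ.pi fun _ : ι ↦ Set.univ.pi fun _ : ι ↦ Set.Icc (-1 : ℝ) 1) :=
    isCompact_univ_pi fun _ ↦ isCompact_univ_pi fun _ ↦ isCompact_Icc
  have hsub : (orthogonalGroup ι ℝ : Set (Matrix ι ι ℝ)) ⊆
      Set.univ.pi fun _ ↦ Set.univ.pi fun _ ↦ Set.Icc (-1) 1 :=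
    fun _ hO a _ b _ ↦ abs_le.mp (entry_norm_bound_of_unitary hO a b)
  exact isCompact_iff_compactSpace.mp (hcube.of_isClosed_subset
    (isClosed_unitary (R := Matrix ι ι ℝ)) hsub)

@[fun_prop]
theorem continuous_orthogonalGroup_apply {T : Type*} [TopologicalSpace T]
    {O : T → orthogonalGroup ι ℝ} (hO : Continuous O) (a b : ι) :
    Continuous fun p ↦ (O p).1 a b :=
  (continuous_subtype_val.comp hO).matrix_elem a b

/-- The exponential of a skew-symmetric matrix, as an orthogonal matrix. -/
noncomputable def expOrthogonal (A : skewAdjoint (Matrix ι ι ℝ)) : orthogonalGroup ι ℝ :=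
  ⟨NormedSpace.exp (A : Matrix ι ι ℝ), by
    have hA : (A : Matrix ι ι ℝ)ᵀ = -A := by
      simpa only [star_eq_conjTranspose, conjTranspose_eq_transpose_of_trivial] using
        skewAdjoint.mem_iff.mp A.2
    have hcomm : Commute (A : Matrix ι ι ℝ) (-A) := (Commute.refl _).neg_right
    rw [mem_orthogonalGroup_iff, ← exp_transpose, hA, ← Matrix.exp_add_of_commute _ _ hcomm,
      add_neg_cancel, NormedSpace.exp_zero]⟩

open scoped Matrix.Norms.Operator in
/-- The flow `O ↦ O exp(tA)` on the orthogonal group, generated by the left-invariant vector field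
of the skew-symmetric matrix `A`. -/
noncomputable def rightExpFlow (A : skewAdjoint (Matrix ι ι ℝ)) :
    Flow ℝ (orthogonalGroup ι ℝ) where
  toFun t O := O * expOrthogonal (t • A)
  cont' := by
    have hexp : Continuous fun t : ℝ ↦ expOrthogonal (t • A) :=
      Continuous.subtype_mk (NormedSpace.exp_continuous.comp (by fun_prop)) _
    exact continuous_snd.mul (hexp.comp continuous_fst)
  map_add' s t O := by
    have hcomm : Commute (t • A : Matrix ι ι ℝ) (s • A) :=
      ((Commute.refl _).smul_left t).smul_right s
    ext1
    simp [expOrthogonal, mul_assoc, add_comm s t, add_smul, Matrix.exp_add_of_commute _ _ hcomm]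
  map_zero' O := by
    ext1
    simp [expOrthogonal]

theorem hasDerivAt_rightExpFlow (A : skewAdjoint (Matrix ι ι ℝ)) (O : orthogonalGroup ι ℝ) :
    HasDerivAt (fun t ↦ (rightExpFlow A t O : Matrix ι ι ℝ)) (O * A) 0 := by
  open scoped Matrix.Norms.Operator in
  have h := (hasDerivAt_exp_smul_const (A : Matrix ι ι ℝ) (0 : ℝ)).const_mul (O : Matrix ι ι ℝ)
  rw [zero_smul, NormedSpace.exp_zero, one_mul] at h
  exact h

theorem integral_eq_zero_of_hasDerivAt_rightExpFlow [MeasurableSpace (orthogonalGroup ι ℝ)]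
    [BorelSpace (orthogonalGroup ι ℝ)] (ν : Measure (orthogonalGroup ι ℝ)) [IsFiniteMeasure ν]
    [ν.IsMulRightInvariant] (A : skewAdjoint (Matrix ι ι ℝ)) {f g : Matrix ι ι ℝ → ℝ}
    (hf : Continuous f) (hg : Continuous g)
    (hfg : ∀ O : orthogonalGroup ι ℝ, HasDerivAt (fun t ↦ f (rightExpFlow A t O)) (g O) 0) :
    ∫ O : orthogonalGroup ι ℝ, g O ∂ν = 0 :=
  integral_eq_zero_of_hasDerivAt_flow (rightExpFlow A)
    (fun t ↦ measurePreserving_mul_right ν (expOrthogonal (t • A)))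
    (hf.comp continuous_subtype_val) (hg.comp continuous_subtype_val) hfg

end Orthogonal

section Weight

variable {ι : Type*} [Fintype ι]

/-- The unnormalised density `exp (tr (X O Y Oᵀ))` of the Harish-Chandra–Itzykson–Zuber integral,
as a function on all matrices. -/
noncomputable def hcizWeight (X Y O : Matrix ι ι ℝ) : ℝ :=
  Real.exp (trace (X * O * Y * Oᵀ))

@[fun_prop]
theorem continuous_hcizWeight {T : Type*} [TopologicalSpace T] {X Y O : T → Matrix ι ι ℝ}
    (hX : Continuous X) (hY : Continuous Y) (hO : Continuous O) :
    Continuous fun p ↦ hcizWeight (X p) (Y p) (O p) := by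
  unfold hcizWeight
  fun_prop

theorem hasDerivAt_matrix_apply {m n : Type*} [Finite m] [Finite n]
    {P : ℝ → Matrix m n ℝ} {P' : Matrix m n ℝ} {t : ℝ} (hP : HasDerivAt P P' t) (a : m) (b : n) :
    HasDerivAt (fun s ↦ P s a b) (P' a b) t :=
  have := Fintype.ofFinite m
  have := Fintype.ofFinite n
  hasDerivAt_pi.mp (hasDerivAt_pi.mp hP a) b

theorem isSymm_transpose_mul_mul {X : Matrix ι ι ℝ} (hX : X.IsSymm) (O : Matrix ι ι ℝ) :
    (Oᵀ * X * O).IsSymm := by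
  simp only [IsSymm, transpose_mul, transpose_transpose, hX.eq, mul_assoc]

theorem hasDerivAt_trace_mul_mul_mul_transpose (X Y : Matrix ι ι ℝ) {P : ℝ → Matrix ι ι ℝ}
    {P' : Matrix ι ι ℝ} {t : ℝ} (hP : HasDerivAt P P' t) :
    HasDerivAt (fun s ↦ trace (X * P s * Y * (P s)ᵀ))
      (trace (X * P' * Y * (P t)ᵀ) + trace (X * P t * Y * P'ᵀ)) t := by
  classical
  have hPt : HasDerivAt (fun s ↦ (P s)ᵀ) P'ᵀ t :=
    hasDerivAt_pi.mpr fun b ↦ hasDerivAt_pi.mpr fun a ↦ hasDerivAt_matrix_apply hP a b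
  open scoped Matrix.Norms.Operator in
  have hprod : HasDerivAt (fun s ↦ X * P s * Y * (P s)ᵀ)
      (X * P' * Y * (P t)ᵀ + X * P t * Y * P'ᵀ) t :=
    ((HasDerivAt.const_mul X hP).mul_const Y).mul hPt
  rw [← trace_add]
  exact HasDerivAt.fun_sum fun a _ ↦ hasDerivAt_matrix_apply hprod a a

theorem trace_mul_mul_mul_transpose_comm {X Y : Matrix ι ι ℝ} (hX : X.IsSymm) (hY : Y.IsSymm)
    (O P : Matrix ι ι ℝ) : trace (X * O * Y * Pᵀ) = trace (X * P * Y * Oᵀ) := by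
  rw [← trace_transpose]
  simp only [transpose_mul, transpose_transpose, hX.eq, hY.eq, ← mul_assoc]
  rw [trace_mul_comm]
  simp only [← mul_assoc]

variable [DecidableEq ι]

theorem trace_mul_mul_diagonal_mul_transpose (X O P : Matrix ι ι ℝ) (y : ι → ℝ) :
    trace (X * P * diagonal y * Oᵀ) = ∑ b, (Oᵀ * X * P) b b * y b := by
  rw [trace_mul_comm]
  simp only [← mul_assoc, trace, Matrix.diag_apply, mul_diagonal]

theorem hasDerivAt_trace_mul_mul_diagonal_update_mul_transpose (X O P : Matrix ι ι ℝ) (y : ι → ℝ)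
    (j : ι) (t : ℝ) :
    HasDerivAt (fun s ↦ trace (X * P * diagonal (update y j s) * Oᵀ)) ((Oᵀ * X * P) j j) t := by
  have hentry (b : ι) := hasDerivAt_pi.mp (hasDerivAt_update y j t) b
  simp only [trace_mul_mul_diagonal_mul_transpose]
  refine (HasDerivAt.fun_sum fun b _ ↦ (hentry b).const_mul ((Oᵀ * X * P) b b)).congr_deriv ?_
  simp [Pi.single_apply]

theorem sum_mul_transpose_mul_mul_apply {X : Matrix ι ι ℝ} (hX : X.IsSymm)
    (O : orthogonalGroup ι ℝ) (i j : ι) :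
    ∑ l, O.1 i l * (O.1ᵀ * X * O.1) j l = (X * O.1) i j := by
  have hO : O.1 * O.1ᵀ = 1 := mem_orthogonalGroup_iff ι ℝ |>.mp O.2
  have hcancel : O.1 * (O.1ᵀ * X * O.1) = X * O.1 := by
    rw [mul_assoc, ← mul_assoc, hO, one_mul]
  rw [← hcancel, mul_apply]
  exact sum_congr rfl fun l _ ↦ by rw [(isSymm_transpose_mul_mul hX O.1).apply]

/-- The skew-symmetric generator `E_{lj} - E_{jl}` of the rotations in the `(j, l)` coordinate
plane. -/
def planeRotationGenerator (l j : ι) : skewAdjoint (Matrix ι ι ℝ) :=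
  ⟨single l j 1 - single j l 1, by
    simp [skewAdjoint.mem_iff, star_eq_conjTranspose]⟩

theorem mul_planeRotationGenerator_apply_right {l j : ι} (hlj : l ≠ j) (O : Matrix ι ι ℝ) (i : ι) :
    (O * (planeRotationGenerator l j).1) i j = O i l := by
  simp [planeRotationGenerator, mul_sub, mul_single_apply_of_ne, hlj.symm]

theorem mul_planeRotationGenerator_apply_left {l j : ι} (hlj : l ≠ j) (O : Matrix ι ι ℝ) (i : ι) :
    (O * (planeRotationGenerator l j).1) i l = -O i j := by
  simp [planeRotationGenerator, mul_sub, mul_single_apply_of_ne, hlj]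

theorem trace_mul_planeRotationGenerator {X : Matrix ι ι ℝ} (hX : X.IsSymm) (y : ι → ℝ)
    (l j : ι) (O : Matrix ι ι ℝ) :
    trace (X * (O * (planeRotationGenerator l j).1) * diagonal y * Oᵀ) =
      (y j - y l) * (Oᵀ * X * O) j l := by
  have hcycle : trace (X * (O * (planeRotationGenerator l j).1) * diagonal y * Oᵀ) =
      trace (diagonal y * (Oᵀ * X * O) * (planeRotationGenerator l j).1) := by
    rw [mul_assoc, trace_mul_comm]
    simp only [mul_assoc]
  rw [hcycle]
  simp only [planeRotationGenerator, mul_sub, trace_sub, trace_mul_single, MulOpposite.op_one,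
    one_smul, diagonal_mul, (isSymm_transpose_mul_mul hX O).apply j l, sub_mul]

end Weight

section SchwingerDyson

variable {ι : Type*} [Fintype ι] [DecidableEq ι] [MeasurableSpace (orthogonalGroup ι ℝ)]
  [BorelSpace (orthogonalGroup ι ℝ)] (ν : Measure (orthogonalGroup ι ℝ)) [IsFiniteMeasure ν]
  [ν.IsMulRightInvariant]

theorem integral_schwingerDyson {X Y : Matrix ι ι ℝ} (hX : X.IsSymm) (hY : Y.IsSymm)
    (A : skewAdjoint (Matrix ι ι ℝ)) {u u' : Matrix ι ι ℝ → ℝ} (hu : Continuous u)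
    (hu' : Continuous u')
    (huu' : ∀ O : orthogonalGroup ι ℝ, HasDerivAt (fun t ↦ u (rightExpFlow A t O)) (u' O) 0) :
    ∫ O : orthogonalGroup ι ℝ, (u' O + u O * (2 * trace (X * (O.1 * A.1) * Y * O.1ᵀ))) *
      hcizWeight X Y O ∂ν = 0 := by
  refine integral_eq_zero_of_hasDerivAt_rightExpFlow ν A (f := fun O ↦ u O * hcizWeight X Y O)
    (g := fun O ↦ (u' O + u O * (2 * trace (X * (O * A.1) * Y * Oᵀ))) * hcizWeight X Y O)
    (by fun_prop) (by fun_prop) fun O ↦ ?_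
  have hexponent := hasDerivAt_trace_mul_mul_mul_transpose X Y (hasDerivAt_rightExpFlow A O)
  simp only [(rightExpFlow A).map_zero_apply] at hexponent
  rw [trace_mul_mul_mul_transpose_comm hX hY _ (O.1 * A.1), ← two_mul] at hexponent
  refine ((huu' O).mul hexponent.exp).congr_deriv ?_
  simp only [hcizWeight, (rightExpFlow A).map_zero_apply]
  ring

theorem integral_sq_sub_sq_mul_hcizWeight {X : Matrix ι ι ℝ} (hX : X.IsSymm) (y : ι → ℝ)
    (i : ι) {j l : ι} (hlj : l ≠ j) :
    ∫ O : orthogonalGroup ι ℝ, (O.1 i l ^ 2 - O.1 i j ^ 2) * hcizWeight X (diagonal y) O ∂ν =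
      2 * (y l - y j) * ∫ O : orthogonalGroup ι ℝ,
        O.1 i j * O.1 i l * (O.1ᵀ * X * O.1) j l * hcizWeight X (diagonal y) O ∂ν := by
  let A := planeRotationGenerator l j
  have hderiv (O : orthogonalGroup ι ℝ) : HasDerivAt
      (fun t ↦ (rightExpFlow A t O).1 i j * (rightExpFlow A t O).1 i l)
      (O.1 i l ^ 2 - O.1 i j ^ 2) 0 := by
    have hentry (b : ι) := hasDerivAt_matrix_apply (hasDerivAt_rightExpFlow A O) i b
    refine ((hentry j).mul (hentry l)).congr_deriv ?_
    simp only [A, mul_planeRotationGenerator_apply_right hlj,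
      mul_planeRotationGenerator_apply_left hlj, (rightExpFlow _).map_zero_apply]
    ring
  have hloop := integral_schwingerDyson ν hX (isSymm_diagonal y) A
    (u := fun O ↦ O i j * O i l) (u' := fun O ↦ O i l ^ 2 - O i j ^ 2)
    (by fun_prop) (by fun_prop) hderiv
  rw [← sub_eq_zero, ← integral_const_mul, ← integral_sub, ← hloop]
  · refine integral_congr_ae (.of_forall fun O ↦ ?_)
    simp only [A, trace_mul_planeRotationGenerator hX]
    ring
  all_goals exact integrable_of_continuous_of_compactSpace (by fun_prop)

end SchwingerDyson

section Moments

variable {n : ℕ}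

instance : BorelSpace (Matrix (Fin n) (Fin n) ℝ) :=
  inferInstanceAs (BorelSpace (Fin n → Fin n → ℝ))

variable (ν : Measure (orthogonalGroup (Fin n) ℝ))

/-- The moment `∫ O_{ij} O_{il} (Oᵀ X O)_{jl} e^{tr(X O Y Oᵀ)} dν(O)`, where `X = diag x` and
`Y = diag y`, through which both terms of the Dunkl-type equation are expressed. -/
noncomputable def couplingMoment (x y : Fin n → ℝ) (i j l : Fin n) : ℝ :=
  ∫ O : orthogonalGroup (Fin n) ℝ, O.1 i j * O.1 i l * (O.1ᵀ * diagonal x * O.1) j l *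
    hcizWeight (diagonal x) (diagonal y) O ∂ν

variable [IsFiniteMeasure ν]

theorem Mmom_sub_Mmom [ν.IsMulRightInvariant] (x y : Fin n → ℝ) (i : Fin n) {j l : Fin n}
    (hlj : l ≠ j) :
    Mmom n ν x y i l - Mmom n ν x y i j = 2 * (y l - y j) * couplingMoment ν x y i j l := by
  rw [couplingMoment, ← integral_sq_sub_sq_mul_hcizWeight ν (isSymm_diagonal x) y i hlj, Mmom,
    Mmom, ← integral_sub]
  · simp only [hcizWeight, sub_mul]
  all_goals exact integrable_of_continuous_of_compactSpace (by fun_prop)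

theorem sum_couplingMoment (x y : Fin n → ℝ) (i j : Fin n) :
    ∑ l, couplingMoment ν x y i j l = x i * Mmom n ν x y i j := by
  have hrow (O : orthogonalGroup (Fin n) ℝ) :
      ∑ l, O.1 i l * (O.1ᵀ * diagonal x * O.1) j l = x i * O.1 i j := by
    rw [sum_mul_transpose_mul_mul_apply (isSymm_diagonal x), diagonal_mul]
  simp only [couplingMoment, Mmom]
  rw [← integral_const_mul, ← integral_finsetSum]
  · refine integral_congr_ae (.of_forall fun O ↦ ?_)
    simp only [hcizWeight, mul_assoc, ← Finset.mul_sum]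
    simp only [← mul_assoc, ← Finset.sum_mul, hrow]
    ring
  · exact fun l _ ↦ integrable_of_continuous_of_compactSpace (by fun_prop)

theorem hasDerivAt_Mmom_update (x y : Fin n → ℝ) (i j : Fin n) :
    HasDerivAt (fun t ↦ Mmom n ν x (update y j t) i j) (couplingMoment ν x y i j j) (y j) := by
  have hderiv (t : ℝ) (O : orthogonalGroup (Fin n) ℝ) :
      HasDerivAt (fun s ↦ O.1 i j ^ 2 * hcizWeight (diagonal x) (diagonal (update y j s)) O)
        (O.1 i j ^ 2 * (hcizWeight (diagonal x) (diagonal (update y j t)) O *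
          (O.1ᵀ * diagonal x * O.1) j j)) t := by
    have hexponent := hasDerivAt_trace_mul_mul_diagonal_update_mul_transpose
      (diagonal x) O.1 O.1 y j t
    exact hexponent.exp.const_mul (O.1 i j ^ 2)
  refine (hasDerivAt_integral_of_continuous (μ := ν) (fun t ↦ by fun_prop)
    (by fun_prop) hderiv (y j)).congr_deriv ?_
  simp only [update_eq_self, couplingMoment]
  exact integral_congr_ae (.of_forall fun O ↦ by ring)

end Moments

theorem statement13_general {n : ℕ} (ν : Measure (orthogonalGroup (Fin n) ℝ)) [IsFiniteMeasure ν]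
    [ν.IsMulRightInvariant] (x y : Fin n → ℝ) (i j : Fin n) (hy : ∀ l, l ≠ j → y l ≠ y j) :
    HasDerivAt (fun t ↦ Mmom n ν x (update y j t) i j)
      (x i * Mmom n ν x y i j -
        (1 / 2) * ∑ l ∈ univ.erase j, (Mmom n ν x y i l - Mmom n ν x y i j) / (y l - y j))
      (y j) := by
  have hquotient : ∀ l ∈ univ.erase j,
      (Mmom n ν x y i l - Mmom n ν x y i j) / (y l - y j) = 2 * couplingMoment ν x y i j l := by
    intro l hl
    have hlj : l ≠ j := ne_of_mem_erase hl
    rw [Mmom_sub_Mmom ν x y i hlj]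
    field_simp [sub_ne_zero.mpr (hy l hlj)]
  refine (hasDerivAt_Mmom_update ν x y i j).congr_deriv ?_
  rw [sum_congr rfl hquotient, ← mul_sum, ← sum_couplingMoment,
    ← add_sum_erase univ _ (mem_univ j)]
  ring

/-- Dunkl-type linear equation for the quadratic moments, `β = 1/2`:
for the Haar probability measure `ν` on `O(n)`, real `x` and `y` with the `y` entries
pairwise distinct, the function `y_j ↦ M_{i,j}` is differentiable and
`∂M_{i,j}/∂y_j + (1/2) Σ_{l≠j} (M_{i,l} − M_{i,j})/(y_l − y_j) = x_i M_{i,j}`. -/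
theorem statement13 (n : ℕ) (hn : 1 ≤ n) (ν : Measure (Matrix.orthogonalGroup (Fin n) ℝ))
    [ν.IsHaarMeasure] [IsProbabilityMeasure ν] (x y : Fin n → ℝ)
    (hy : ∀ i j : Fin n, i ≠ j → y i ≠ y j) (i j : Fin n) :
    HasDerivAt (fun t => Mmom n ν x (Function.update y j t) i j)
      (x i * Mmom n ν x y i j -
        (1 / 2) *
          ∑ l ∈ Finset.univ.erase j, (Mmom n ν x y i l - Mmom n ν x y i j) / (y l - y j))
      (y j) := by
  have := isMulRightInvariant_of_isProbabilityMeasure ν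
  exact statement13_general ν x y i j fun l hlj ↦ hy l j hlj
end

section
/- Let n ≥ 1, let ν be the Haar probability measure on the orthogonal group O(n) of n×n real orthogonal matrices, and let y = (y₁,…,y_n) ∈ ℝⁿ. Define I(x) = ∫_{O(n)} exp(tr(X O Y Oᵀ)) dν(O) for x = (x₁,…,x_n) ∈ ℝⁿ, where X = diag(x₁,…,x_n) and Y = diag(y₁,…,y_n). Then I is smooth, and at every point x with pairwise distinct entries it satisfies the Calogero equation: Σ_{i=1}^{n} ∂²I/∂x_i² + (1/2) Σ_{i≠j} (1/(x_i−x_j)) (∂I/∂x_i − ∂I/∂x_j) = (Σ_{j=1}^{n} y_j²) · I(x). -/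
open MeasureTheory Matrix Finset Function

/-- The angular integral `I(x) = ∫_{O(n)} e^{tr(X O Y Oᵀ)} dν(O)` with
`X = diag x`, `Y = diag y`. -/
noncomputable def angInt (n : ℕ) (ν : Measure (Matrix.orthogonalGroup (Fin n) ℝ))
    (y : Fin n → ℝ) (x : Fin n → ℝ) : ℝ :=
  ∫ O : Matrix.orthogonalGroup (Fin n) ℝ,
    Real.exp (Matrix.trace (Matrix.diagonal x * (O : Matrix (Fin n) (Fin n) ℝ) *
      Matrix.diagonal y * (O : Matrix (Fin n) (Fin n) ℝ)ᵀ)) ∂ν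

/-!
Write `M = O Y Oᵀ`, so that `I(x) = ∫ exp (∑ k, x k * M k k)`, and let `⟨g⟩` be the integral of `g`
against the weight `exp (∑ k, x k * M k k)`. As `x ↦ exp (∑ k, x k • M k k)` takes values in the
Banach algebra `C(O(n), ℝ)`, whose exponential is analytic, `I` is analytic and differentiating it
in `x i` inserts a factor `M i i`.

Left translation by `exp (t A)` with `A` skew-symmetric conjugates `M`, hence moves it with velocity
`⁅A, M⁆`, and preserves the integral. For `A = E_ij - E_ji` the resulting identity
`d/dt ∫ exp (∑ k, x k * M k k) * M i j = 0` at `t = 0` reads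
`⟨M i i⟩ - ⟨M j j⟩ = 2 * (x i - x j) * ⟨M i j ^ 2⟩`. The left side of the Calogero equation is
therefore `∑ i, ∑ j, ⟨M i j ^ 2⟩ = ⟨trace (M * M)⟩`, and `trace (M * M) = trace (Y * Y)`.
-/

open NormedSpace (exp)

section ExpTilt

variable {ι 𝔸 F : Type*} [Fintype ι] [NormedCommRing 𝔸] [NormedAlgebra ℝ 𝔸]
  [NormedAddCommGroup F] [NormedSpace ℝ F]

/-- The exponential tilt of a functional `Λ` in the directions `m i`: the functional
`g ↦ Λ (exp (∑ i, x i • m i) * g)`. When `Λ` is integration against a measure `μ`, this is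
integration against the measure with density `exp (∑ i, x i • m i)` with respect to `μ`. -/
noncomputable def expTilt (Λ : 𝔸 →L[ℝ] F) (m : ι → 𝔸) (x : ι → ℝ) : 𝔸 →L[ℝ] F :=
  Λ ∘L ContinuousLinearMap.mul ℝ 𝔸 (exp (∑ i, x i • m i))

variable (Λ : 𝔸 →L[ℝ] F) (m : ι → 𝔸)

theorem expTilt_apply (x : ι → ℝ) (g : 𝔸) :
    expTilt Λ m x g = Λ (exp (∑ i, x i • m i) * g) :=
  rfl

variable [CompleteSpace 𝔸] (g : 𝔸)

theorem contDiff_expTilt_apply {k : WithTop ℕ∞} : ContDiff ℝ k fun x => expTilt Λ m x g := by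
  have hexp : ContDiff ℝ k (exp : 𝔸 → 𝔸) :=
    contDiff_iff_contDiffAt.2 fun a => (NormedSpace.exp_analytic a).contDiffAt
  have hlin : ContDiff ℝ k fun x : ι → ℝ => ∑ i, x i • m i := by fun_prop
  exact Λ.contDiff.comp ((hexp.comp hlin).mul contDiff_const)

variable [DecidableEq ι] (x : ι → ℝ) (i : ι)

theorem hasDerivAt_expTilt_update (t : ℝ) :
    HasDerivAt (fun s => expTilt Λ m (update x i s) g)
      (expTilt Λ m (update x i t) (m i * g)) t := by
  have hlin : HasDerivAt (fun s => ∑ j, update x i s j • m j) (m i) t := by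
    have h := HasDerivAt.fun_sum fun j (_ : j ∈ univ) =>
      (hasDerivAt_pi.1 (hasDerivAt_update x i t) j).smul_const (m j)
    exact h.congr_deriv (by simp [Pi.single_apply])
  have hexp := hasFDerivAt_exp.comp_hasDerivAt t hlin
  refine (Λ.hasFDerivAt.comp_hasDerivAt t (hexp.mul_const g)).congr_deriv ?_
  simp [expTilt_apply, mul_assoc]

theorem deriv_expTilt_update :
    deriv (fun t => expTilt Λ m (update x i t) g) =
      fun t => expTilt Λ m (update x i t) (m i * g) :=
  funext fun t => (hasDerivAt_expTilt_update Λ m g x i t).deriv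

theorem iteratedDeriv_expTilt_update (k : ℕ) :
    iteratedDeriv k (fun t => expTilt Λ m (update x i t) g) =
      fun t => expTilt Λ m (update x i t) (m i ^ k * g) := by
  induction k with
  | zero => simp
  | succ k ih => rw [iteratedDeriv_succ, ih, deriv_expTilt_update, pow_succ', mul_assoc]

end ExpTilt

theorem hasDerivAt_exp_smul_conj {𝔸 : Type*} [NormedRing 𝔸] [NormedAlgebra ℝ 𝔸] [CompleteSpace 𝔸]
    (a m : 𝔸) : HasDerivAt (fun t : ℝ => exp (t • a) * m * exp (t • -a)) ⁅a, m⁆ 0 := by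
  have hexp (b : 𝔸) : HasDerivAt (fun t : ℝ => exp (t • b)) b 0 := by
    simpa using hasDerivAt_exp_smul_const (𝕂 := ℝ) b 0
  refine (((hexp a).mul_const m).mul (hexp (-a))).congr_deriv ?_
  simp [Ring.lie_def, sub_eq_add_neg]

theorem exp_continuousMap_apply {K : Type*} [TopologicalSpace K] [CompactSpace K]
    (f : C(K, ℝ)) (k : K) : exp f k = Real.exp (f k) := by
  rw [Real.exp_eq_exp_ℝ]
  exact NormedSpace.map_exp (ContinuousMap.evalAlgHom ℝ ℝ k)
    (ContinuousEvalConst.continuous_eval_const k) f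

section CompactIntegral

variable {K : Type*} [TopologicalSpace K] [CompactSpace K] [MeasurableSpace K] [BorelSpace K]
  (μ : Measure K) [IsFiniteMeasure μ]

/-- Integration against a finite measure on a compact space, as a bounded functional on continuous
functions. -/
noncomputable def integralFunctional : C(K, ℝ) →L[ℝ] ℝ :=
  L1.integralCLM.comp (ContinuousMap.toLp 1 μ ℝ)

theorem integralFunctional_apply (f : C(K, ℝ)) : integralFunctional μ f = ∫ k, f k ∂μ := by
  rw [← integral_congr_ae (ContinuousMap.coeFn_toLp μ (p := 1) (𝕜 := ℝ) f),
    ← L1.integral_eq_integral, L1.integral_eq]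
  rfl

end CompactIntegral

section LeftInvariant

variable {G : Type*} [Group G] [TopologicalSpace G] [ContinuousMul G] [CompactSpace G]
  [MeasurableSpace G] [BorelSpace G] (μ : Measure G) [IsFiniteMeasure μ] [μ.IsMulLeftInvariant]

theorem integral_eq_zero_of_hasDerivAt_mul_left (γ : AddChar ℝ G) (f f' : C(G, ℝ))
    (hf : ∀ g, HasDerivAt (fun t => f (γ t * g)) (f' g) 0) : ∫ g, f' g ∂μ = 0 := by
  have hflow (t : ℝ) (g : G) : HasDerivAt (fun s => f (γ s * g)) (f' (γ t * g)) t := by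
    have h := hf (γ t * g)
    rw [← sub_self t] at h
    simpa [← mul_assoc, ← AddChar.map_add_eq_mul] using h.comp_sub_const t t
  have hmul (h : C(G, ℝ)) (t : ℝ) : Continuous fun g => h (γ t * g) := by fun_prop
  have hderiv := (hasDerivAt_integral_of_dominated_loc_of_deriv_le (μ := μ) (x₀ := (0 : ℝ))
    (F := fun t g => f (γ t * g)) (F' := fun t g => f' (γ t * g))
    (bound := fun _ => ‖f'‖) Filter.univ_mem
    (.of_forall fun t => (hmul f t).aestronglyMeasurable)
    ((hmul f 0).integrable_of_hasCompactSupport (.of_compactSpace _))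
    (hmul f' 0).aestronglyMeasurable
    (.of_forall fun g t _ => f'.norm_coe_le_norm _) (integrable_const _)
    (.of_forall fun g t _ => hflow t g)).2
  simp only [integral_mul_left_eq_self (μ := μ)] at hderiv
  exact hderiv.unique (hasDerivAt_const _ _)

end LeftInvariant

theorem compactSpace_unitary (E : Type*) [NormedRing E] [StarRing E] [CStarRing E]
    [ProperSpace E] : CompactSpace (unitary E) := by
  have hbdd : Bornology.IsBounded (unitary E : Set E) :=
    isBounded_iff_forall_norm_le.2 ⟨‖(1 : E)‖, fun U hU => by
      rw [← mul_one U, CStarRing.norm_mem_unitary_mul 1 hU]⟩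
  exact isCompact_iff_compactSpace.1 (Metric.isCompact_of_isClosed_isBounded isClosed_unitary hbdd)

section OrthogonalGroup

variable {ι : Type*} [Fintype ι] [DecidableEq ι]

attribute [local instance] LieRing.ofAssociativeRing LieAlgebra.ofAssociativeAlgebra

open scoped Matrix.Norms.L2Operator in
instance inst_s15 : CompactSpace (orthogonalGroup ι ℝ) :=
  compactSpace_unitary (Matrix ι ι ℝ)

theorem exp_smul_mem_orthogonalGroup {A : Matrix ι ι ℝ} (hA : Aᵀ = -A) (t : ℝ) :
    exp (t • A) ∈ orthogonalGroup ι ℝ := by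
  rw [mem_orthogonalGroup_iff, ← exp_transpose, transpose_smul, hA, smul_neg,
    ← exp_add_of_commute _ _ (Commute.refl (t • A)).neg_right, add_neg_cancel, NormedSpace.exp_zero]

/-- The one-parameter subgroup `t ↦ exp (t • A)` of the orthogonal group generated by a
skew-symmetric matrix `A`. -/
noncomputable def rotationFlow {A : Matrix ι ι ℝ} (hA : Aᵀ = -A) :
    AddChar ℝ (orthogonalGroup ι ℝ) where
  toFun t := ⟨exp (t • A), exp_smul_mem_orthogonalGroup hA t⟩
  map_zero_eq_one' := by simp
  map_add_eq_mul' s t := Subtype.ext <| (congrArg exp (add_smul s t A)).trans <|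
    exp_add_of_commute _ _ (((Commute.refl A).smul_left s).smul_right t)

theorem coe_rotationFlow {A : Matrix ι ι ℝ} (hA : Aᵀ = -A) (t : ℝ) :
    (rotationFlow hA t : Matrix ι ι ℝ) = exp (t • A) :=
  rfl

open scoped Matrix.Norms.Operator in
theorem hasDerivAt_rotationFlow_conj {A : Matrix ι ι ℝ} (hA : Aᵀ = -A) (M : Matrix ι ι ℝ)
    (L : Module.Dual ℝ (Matrix ι ι ℝ)) :
    HasDerivAt (fun t => L (rotationFlow hA t * M * (rotationFlow hA t : Matrix ι ι ℝ)ᵀ))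
      (L ⁅A, M⁆) 0 := by
  have h : HasDerivAt (fun t : ℝ => L (exp (t • A) * M * exp (t • -A))) (L ⁅A, M⁆) 0 :=
    L.toContinuousLinearMap.hasFDerivAt.comp_hasDerivAt 0 (hasDerivAt_exp_smul_conj A M)
  simpa only [coe_rotationFlow, ← exp_transpose, transpose_smul, hA] using h

/-- The adjoint orbit map `O ↦ O Y Oᵀ` of a matrix `Y`. -/
def orbitMap (Y : Matrix ι ι ℝ) : C(orthogonalGroup ι ℝ, Matrix ι ι ℝ) where
  toFun O := O * Y * (O : Matrix ι ι ℝ)ᵀ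
  continuous_toFun := by fun_prop

theorem orbitMap_apply (Y : Matrix ι ι ℝ) (O : orthogonalGroup ι ℝ) :
    orbitMap Y O = O * Y * (O : Matrix ι ι ℝ)ᵀ :=
  rfl

theorem orbitMap_mul (Y : Matrix ι ι ℝ) (R O : orthogonalGroup ι ℝ) :
    orbitMap Y (R * O) = R * orbitMap Y O * (R : Matrix ι ι ℝ)ᵀ := by
  simp [orbitMap_apply, mul_assoc]

theorem isSymm_orbitMap {Y : Matrix ι ι ℝ} (hY : Y.IsSymm) (O : orthogonalGroup ι ℝ) :
    (orbitMap Y O).IsSymm := by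
  simp [orbitMap_apply, Matrix.IsSymm, hY.eq, mul_assoc]

theorem trace_orbitMap_mul_self (Y : Matrix ι ι ℝ) (O : orthogonalGroup ι ℝ) :
    trace (orbitMap Y O * orbitMap Y O) = trace (Y * Y) := by
  have hO := (mem_orthogonalGroup_iff' ι ℝ).1 O.2
  have hsq : orbitMap Y O * orbitMap Y O = orbitMap (Y * Y) O := by
    calc orbitMap Y O * orbitMap Y O
      _ = O * Y * ((O : Matrix ι ι ℝ)ᵀ * (O : Matrix ι ι ℝ)) * Y * (O : Matrix ι ι ℝ)ᵀ := by
        simp only [orbitMap_apply, mul_assoc]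
      _ = orbitMap (Y * Y) O := by simp only [hO, orbitMap_apply, mul_assoc, mul_one]
  rw [hsq, orbitMap_apply, trace_mul_comm, ← mul_assoc, hO, one_mul]

/-- The continuous function `O ↦ L (O Y Oᵀ)` on the orthogonal group attached to a linear functional
`L` on matrices. -/
noncomputable def orbitObservable (Y : Matrix ι ι ℝ) :
    Module.Dual ℝ (Matrix ι ι ℝ) →ₗ[ℝ] C(orthogonalGroup ι ℝ, ℝ) where
  toFun L := ⟨fun O => L (orbitMap Y O),
    L.continuous_of_finiteDimensional.comp (orbitMap Y).continuous⟩
  map_add' _ _ := rfl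
  map_smul' _ _ := rfl

theorem orbitObservable_apply (Y : Matrix ι ι ℝ) (L : Module.Dual ℝ (Matrix ι ι ℝ))
    (O : orthogonalGroup ι ℝ) : orbitObservable Y L O = L (orbitMap Y O) :=
  rfl

theorem hasDerivAt_orbitObservable_rotationFlow_mul (Y : Matrix ι ι ℝ) {A : Matrix ι ι ℝ}
    (hA : Aᵀ = -A) (L : Module.Dual ℝ (Matrix ι ι ℝ)) (O : orthogonalGroup ι ℝ) :
    HasDerivAt (fun t => orbitObservable Y L (rotationFlow hA t * O))
      (orbitObservable Y (L ∘ₗ LieAlgebra.ad ℝ (Matrix ι ι ℝ) A) O) 0 := by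
  simpa only [orbitObservable_apply, orbitMap_mul, LinearMap.comp_apply, LieAlgebra.ad_apply] using
    hasDerivAt_rotationFlow_conj hA (orbitMap Y O) L

/-- The matrix entry `O ↦ (O Y Oᵀ) i j`. -/
noncomputable def orbitEntry (Y : Matrix ι ι ℝ) (i j : ι) : C(orthogonalGroup ι ℝ, ℝ) :=
  orbitObservable Y (entryLinearMap ℝ ℝ i j)

theorem orbitObservable_entryLinearMap (Y : Matrix ι ι ℝ) (i j : ι) :
    orbitObservable Y (entryLinearMap ℝ ℝ i j) = orbitEntry Y i j :=
  rfl

theorem orbitEntry_apply (Y : Matrix ι ι ℝ) (i j : ι) (O : orthogonalGroup ι ℝ) :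
    orbitEntry Y i j O = orbitMap Y O i j :=
  rfl

theorem orbitEntry_comm {Y : Matrix ι ι ℝ} (hY : Y.IsSymm) (i j : ι) :
    orbitEntry Y i j = orbitEntry Y j i := by
  ext O
  exact (isSymm_orbitMap hY O).apply j i

theorem sum_orbitEntry_sq {Y : Matrix ι ι ℝ} (hY : Y.IsSymm) :
    ∑ i, ∑ j, orbitEntry Y i j ^ 2 = trace (Y * Y) • (1 : C(orthogonalGroup ι ℝ, ℝ)) := by
  ext O
  rw [← trace_orbitMap_mul_self Y O]
  simp [trace, mul_apply, orbitEntry_apply, sq, (isSymm_orbitMap hY O).apply]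

theorem entryLinearMap_comp_ad_single_sub_single (i j : ι) :
    entryLinearMap ℝ ℝ i j ∘ₗ LieAlgebra.ad ℝ (Matrix ι ι ℝ) (single i j 1 - single j i 1) =
      entryLinearMap ℝ ℝ j j - entryLinearMap ℝ ℝ i i := by
  refine LinearMap.ext fun M => ?_
  obtain rfl | hij := eq_or_ne i j
  · simp
  · simp [Ring.lie_def, hij, hij.symm]

theorem sum_smul_entryLinearMap_comp_ad_single_sub_single (i j : ι) (x : ι → ℝ) :
    (∑ k, x k • entryLinearMap ℝ ℝ k k) ∘ₗ
        LieAlgebra.ad ℝ (Matrix ι ι ℝ) (single i j 1 - single j i 1) =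
      (x i - x j) • (entryLinearMap ℝ ℝ i j + entryLinearMap ℝ ℝ j i) := by
  refine LinearMap.ext fun M => ?_
  simp only [LinearMap.coe_comp, LinearMap.coe_sum, LinearMap.add_apply, LinearMap.smul_apply,
    Function.comp_apply, Finset.sum_apply, entryLinearMap_apply, LieAlgebra.ad_apply, Ring.lie_def,
    sub_mul, mul_sub, Matrix.sub_apply, mul_apply, single_apply, ite_and, ite_mul, mul_ite, one_mul,
    mul_one, zero_mul, mul_zero, sum_ite_irrel, sum_ite_eq, sum_const_zero, sum_sub_distrib,
    mem_univ, if_true, smul_eq_mul]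
  ring

section Integral

variable [MeasurableSpace (orthogonalGroup ι ℝ)] [BorelSpace (orthogonalGroup ι ℝ)]
  (μ : Measure (orthogonalGroup ι ℝ)) [IsFiniteMeasure μ]

theorem integralFunctional_exp_mul_ad_eq_zero [μ.IsMulLeftInvariant] (Y : Matrix ι ι ℝ)
    {A : Matrix ι ι ℝ} (hA : Aᵀ = -A) (L L' : Module.Dual ℝ (Matrix ι ι ℝ)) :
    integralFunctional μ (exp (orbitObservable Y L) *
      (orbitObservable Y (L ∘ₗ LieAlgebra.ad ℝ (Matrix ι ι ℝ) A) * orbitObservable Y L' +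
        orbitObservable Y (L' ∘ₗ LieAlgebra.ad ℝ (Matrix ι ι ℝ) A))) = 0 := by
  rw [integralFunctional_apply]
  refine integral_eq_zero_of_hasDerivAt_mul_left μ (rotationFlow hA)
    (exp (orbitObservable Y L) * orbitObservable Y L') _ fun O => ?_
  have hobs := hasDerivAt_orbitObservable_rotationFlow_mul Y hA (O := O)
  have hprod := (hobs L).exp.mul (hobs L')
  simp only [AddChar.map_zero_eq_one, one_mul] at hprod
  refine (hprod.congr_deriv ?_).congr_of_eventuallyEq (.of_forall fun t => ?_)
  · simp only [ContinuousMap.mul_apply, ContinuousMap.add_apply, exp_continuousMap_apply]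
    ring
  · simp only [ContinuousMap.mul_apply, exp_continuousMap_apply, Pi.mul_apply]

/-- Integration over the orthogonal group against the weight `exp (tr (X O Y Oᵀ))`, where
`X = diagonal x`. -/
noncomputable def orbitTilt (Y : Matrix ι ι ℝ) (x : ι → ℝ) : C(orthogonalGroup ι ℝ, ℝ) →L[ℝ] ℝ :=
  expTilt (integralFunctional μ) (fun i => orbitEntry Y i i) x

theorem orbitTilt_apply (Y : Matrix ι ι ℝ) (x : ι → ℝ) (g : C(orthogonalGroup ι ℝ, ℝ)) :
    orbitTilt μ Y x g = integralFunctional μ (exp (∑ i, x i • orbitEntry Y i i) * g) :=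
  rfl

theorem orbitTilt_orbitEntry_sub [μ.IsMulLeftInvariant] {Y : Matrix ι ι ℝ} (hY : Y.IsSymm)
    (x : ι → ℝ) (i j : ι) :
    orbitTilt μ Y x (orbitEntry Y i i) - orbitTilt μ Y x (orbitEntry Y j j) =
      2 * (x i - x j) * orbitTilt μ Y x (orbitEntry Y i j ^ 2) := by
  have hskew : (single i j 1 - single j i 1 : Matrix ι ι ℝ)ᵀ = -(single i j 1 - single j i 1) := by
    simp
  have hward := integralFunctional_exp_mul_ad_eq_zero μ Y hskew
    (∑ k, x k • entryLinearMap ℝ ℝ k k) (entryLinearMap ℝ ℝ i j)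
  rw [sum_smul_entryLinearMap_comp_ad_single_sub_single,
    entryLinearMap_comp_ad_single_sub_single] at hward
  simp only [map_sum, map_smul, map_add, map_sub, orbitObservable_entryLinearMap,
    orbitEntry_comm hY j i] at hward
  have hgather : (x i - x j) • (orbitEntry Y i j + orbitEntry Y i j) * orbitEntry Y i j +
      (orbitEntry Y j j - orbitEntry Y i i) =
      (2 * (x i - x j)) • orbitEntry Y i j ^ 2 - (orbitEntry Y i i - orbitEntry Y j j) := by
    simp only [smul_mul_assoc, add_mul, ← sq]
    module
  rw [hgather, ← orbitTilt_apply, map_sub, map_smul, map_sub, smul_eq_mul, sub_eq_zero] at hward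
  exact hward.symm

/-- The angular integral `∫ exp (tr (X O Y Oᵀ)) dμ(O)` with `X = diagonal x`, for an arbitrary
matrix `Y` and measure `μ`. -/
noncomputable def angularIntegral (Y : Matrix ι ι ℝ) (x : ι → ℝ) : ℝ :=
  ∫ O : orthogonalGroup ι ℝ,
    Real.exp (trace (diagonal x * (O : Matrix ι ι ℝ) * Y * (O : Matrix ι ι ℝ)ᵀ)) ∂μ

theorem angularIntegral_eq_orbitTilt_one (Y : Matrix ι ι ℝ) :
    angularIntegral μ Y = fun x => orbitTilt μ Y x 1 := by
  funext x
  rw [angularIntegral, orbitTilt_apply, mul_one, integralFunctional_apply]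
  refine integral_congr_ae (.of_forall fun O => ?_)
  simp [exp_continuousMap_apply, orbitEntry_apply, orbitMap_apply, mul_assoc, trace]

open scoped ContDiff in
theorem statement15_general [μ.IsMulLeftInvariant] {Y : Matrix ι ι ℝ} (hY : Y.IsSymm) :
    ContDiff ℝ ω (angularIntegral μ Y) ∧ ∀ x : ι → ℝ, Injective x →
      (∑ i, iteratedDeriv 2 (fun t => angularIntegral μ Y (update x i t)) (x i)) +
        (1 / 2) * (∑ i, ∑ j ∈ univ.erase i, (1 / (x i - x j)) *
          (deriv (fun t => angularIntegral μ Y (update x i t)) (x i) -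
            deriv (fun t => angularIntegral μ Y (update x j t)) (x j))) =
      trace (Y * Y) * angularIntegral μ Y x := by
  rw [angularIntegral_eq_orbitTilt_one]
  refine ⟨contDiff_expTilt_apply _ _ _, fun x hx => ?_⟩
  have hderiv (i : ι) : deriv (fun t => orbitTilt μ Y (update x i t) 1) (x i) =
      orbitTilt μ Y x (orbitEntry Y i i) := by
    simp only [orbitTilt, deriv_expTilt_update, update_eq_self, mul_one]
  have hderiv₂ (i : ι) : iteratedDeriv 2 (fun t => orbitTilt μ Y (update x i t) 1) (x i) =
      orbitTilt μ Y x (orbitEntry Y i i ^ 2) := by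
    simp only [orbitTilt, iteratedDeriv_expTilt_update, update_eq_self, mul_one]
  have hpair (i : ι) : ∑ j ∈ univ.erase i, 1 / (x i - x j) *
      (orbitTilt μ Y x (orbitEntry Y i i) - orbitTilt μ Y x (orbitEntry Y j j)) =
      2 * ∑ j ∈ univ.erase i, orbitTilt μ Y x (orbitEntry Y i j ^ 2) := by
    rw [mul_sum]
    refine sum_congr rfl fun j hj => ?_
    have hne : x i - x j ≠ 0 := sub_ne_zero.2 (hx.ne (ne_of_mem_erase hj).symm)
    rw [orbitTilt_orbitEntry_sub μ hY x i j]
    field_simp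
  calc _ = ∑ i, ∑ j, orbitTilt μ Y x (orbitEntry Y i j ^ 2) := by
        simp only [hderiv, hderiv₂, hpair]
        rw [← mul_sum, one_div, inv_mul_cancel_left₀ two_ne_zero, ← sum_add_distrib]
        exact sum_congr rfl fun i _ =>
          add_sum_erase _ (fun j => orbitTilt μ Y x (orbitEntry Y i j ^ 2)) (mem_univ i)
    _ = orbitTilt μ Y x (trace (Y * Y) • 1) := by simp only [← sum_orbitEntry_sq hY, map_sum]
    _ = _ := by rw [map_smul, smul_eq_mul]

end Integral

end OrthogonalGroup

instance {n : ℕ} : BorelSpace (Matrix (Fin n) (Fin n) ℝ) :=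
  inferInstanceAs (BorelSpace (Fin n → Fin n → ℝ))

instance {n : ℕ} : BorelSpace (orthogonalGroup (Fin n) ℝ) :=
  Subtype.borelSpace _

/-- Calogero equation for the angular integral, `β = 1/2`: for the Haar
probability measure `ν` on `O(n)`, the angular integral `I` is smooth, and at every `x`
with pairwise distinct entries,
`Σᵢ ∂²I/∂xᵢ² + (1/2) Σ_{i≠j} (∂I/∂xᵢ − ∂I/∂xⱼ)/(xᵢ−xⱼ) = (Σⱼ yⱼ²) I(x)`. -/
theorem statement15 (n : ℕ) (hn : 1 ≤ n) (ν : Measure (Matrix.orthogonalGroup (Fin n) ℝ))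
    [ν.IsHaarMeasure] [IsProbabilityMeasure ν] (y : Fin n → ℝ) :
    ContDiff ℝ (⊤ : ℕ∞) (angInt n ν y) ∧
    ∀ x : Fin n → ℝ, (∀ i j : Fin n, i ≠ j → x i ≠ x j) →
      (∑ i : Fin n, iteratedDeriv 2 (fun t => angInt n ν y (Function.update x i t)) (x i)) +
        (1 / 2) * (∑ i : Fin n, ∑ j ∈ Finset.univ.erase i,
          (1 / (x i - x j)) *
            (deriv (fun t => angInt n ν y (Function.update x i t)) (x i) -
              deriv (fun t => angInt n ν y (Function.update x j t)) (x j))) =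
      (∑ j : Fin n, (y j) ^ 2) * angInt n ν y x := by
  obtain ⟨hsmooth, hcalogero⟩ := statement15_general ν (isSymm_diagonal y)
  refine ⟨hsmooth.of_le le_top, fun x hx => (hcalogero x fun i j => ?_).trans ?_⟩
  · exact not_imp_not.1 (hx i j)
  · simp only [diagonal_mul_diagonal, trace_diagonal, sq]
    rfl
end
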